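/- arXiv:0810.0435 — 2 statements merged into one kernel-verified Lean document; each statement's English description precedes it below -/
import Mathlib

section
/- Let (A, *, ≻) be a dipterous algebra over a field K and let M_{pq} be the multibrace operations defined recursively from the dipterous structure: with ω^≻(a₁,…,a_k) := ((a₁≻a₂)≻…)≻a_k, set M_{00}=0, M_{10}=M_{01}=id, M_{p0}=0=M_{0q} for p,q ≥ 2, and for p,q ≥ 1, M_{pq}(x₁,…,x_p; y₁,…,y_q) := ω^≻(x₁,…,x_p) * ω^≻(y₁,…,y_q) − Σ_{k=2}^{p+q} Σ ω^≻( M_{i₁j₁}(x¹;y¹), …, M_{i_kj_k}(x^k;y^k) ), the inner sum over sequences (i₁,…,i_k), (j₁,…,j_k) of nonnegative integers with i₁+…+i_k = p, j₁+…+j_k = q and i_t + j_t ≥ 1, with consecutive blocks x^t, y^t. Then for all n ≥ 1, m ≥ 2 and all x₁,…,x_n, y₁,…,y_m ∈ A: M_{nm}(x₁,…,x_n; y₁,…,y_m) = M_{n(m−1)}( x₁,…,x_n ; (y₁≻y₂), y₃, …, y_m ) − y₁ ≻ M_{n(m−1)}( x₁,…,x_n ; y₂, …, y_m ). -/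
open Finset

/-- The set of pairs of sequences `(i₁,…,i_k)`, `(j₁,…,j_k)` of nonnegative integers with
`i₁+⋯+i_k = p`, `j₁+⋯+j_k = q` and `i_t + j_t ≥ 1` for all `t`, encoded as functions
`Fin k → ℕ × ℕ`. -/
def Comps (k p q : ℕ) : Finset (Fin k → ℕ × ℕ) :=
  (Fintype.piFinset fun _ : Fin k => Finset.range (p + 1) ×ˢ Finset.range (q + 1)).filter
    fun c => (∑ t, (c t).1) = p ∧ (∑ t, (c t).2) = q ∧ ∀ t, 1 ≤ (c t).1 + (c t).2

/-- Offset of the `t`-th consecutive block in the first family of variables. -/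
def off1 {k : ℕ} (c : Fin k → ℕ × ℕ) (t : Fin k) : ℕ :=
  ∑ u ∈ Finset.univ.filter (fun u => u < t), (c u).1

/-- Offset of the `t`-th consecutive block in the second family of variables. -/
def off2 {k : ℕ} (c : Fin k → ℕ × ℕ) (t : Fin k) : ℕ :=
  ∑ u ∈ Finset.univ.filter (fun u => u < t), (c u).2

section Ops
variable {A : Type*} [AddCommGroup A]

/-- `M_{i_t j_t}(x^t; y^t)`: the operation `M` applied to the `t`-th consecutive blocks of
the sequences `x` and `y`, as prescribed by the composition `c`. -/
def blockVal (M : ∀ p q : ℕ, (Fin p → A) → (Fin q → A) → A)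
    {k : ℕ} (c : Fin k → ℕ × ℕ) (x y : ℕ → A) (t : Fin k) : A :=
  M (c t).1 (c t).2 (fun s => x (off1 c t + s.1)) (fun s => y (off2 c t + s.1))

/-- The multibrace relation `(R_{ijk})`. -/
def Rrel (M : ∀ p q : ℕ, (Fin p → A) → (Fin q → A) → A)
    (i j k : ℕ) (x y z : ℕ → A) : Prop :=
  ∑ l ∈ Finset.Icc 1 (i + j), ∑ c ∈ Comps l i j,
      M l k (fun t : Fin l => blockVal M c x y t) (fun s : Fin k => z s.1)
    = ∑ m ∈ Finset.Icc 1 (j + k), ∑ c ∈ Comps m j k,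
        M i m (fun s : Fin i => x s.1) (fun t : Fin m => blockVal M c y z t)

/-- `ω^≻`: `omegaIter s x n = ((x₀ ≻ x₁) ≻ ⋯) ≻ x_n`. -/
def omegaIter (s : A → A → A) (x : ℕ → A) : ℕ → A
  | 0 => x 0
  | n + 1 => s (omegaIter s x n) (x (n + 1))

end Ops

/-!
Let `T_{pq}(x; y)` be the sum of `ω^≻(M_{i₁j₁}, …, M_{i_kj_k})` over all `k ≥ 1`. The recursion
for `M` says that `T_{pq}(x; y) = ω^≻(x) * ω^≻(y)` for `p, q ≥ 1`, while `T_{p0}` and `T_{0q}` are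
`ω^≻(x)` and `ω^≻(y)`. Since `ω^≻` does not see the merging of `y₁, y₂` into `y₁ ≻ y₂`, neither
does `T`. Splitting off the last block gives `T_{nm} = M_{nm} + ∑ T_{ij} ≻ M_{n-i,m-j}`. Compare
this for `y₁, y₂, y₃, …` and for `y₁ ≻ y₂, y₃, …`: the terms with `j ≥ 2` in the former agree with
those with `j ≥ 1` in the latter. For `i ≥ 1` the remaining terms agree by induction on `n`, because
`T_{i1}(x; y₁) ≻ b = (ω^≻(x) * y₁) ≻ b = ω^≻(x) ≻ (y₁ ≻ b)`. For `i = 0` only the term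
`T_{01}(y₁) ≻ M_{n,m-1}(x; y₂, …, y_m) = y₁ ≻ M_{n,m-1}(x; y₂, …, y_m)` is left over.
-/

section Compositions

theorem mem_comps {k p q : ℕ} {c : Fin k → ℕ × ℕ} :
    c ∈ Comps k p q ↔
      (∑ t, (c t).1) = p ∧ (∑ t, (c t).2) = q ∧ ∀ t, 1 ≤ (c t).1 + (c t).2 := by
  simp only [Comps, mem_filter, Fintype.mem_piFinset, mem_product, mem_range,
    and_iff_right_iff_imp]
  rintro ⟨rfl, rfl, -⟩ t
  exact ⟨Nat.lt_succ_of_le (single_le_sum_of_canonicallyOrdered (f := fun u => (c u).1)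
      (mem_univ t)),
    Nat.lt_succ_of_le (single_le_sum_of_canonicallyOrdered (f := fun u => (c u).2) (mem_univ t))⟩

theorem comps_eq_empty_of_lt {k p q : ℕ} (h : p + q < k) : Comps k p q = ∅ := by
  refine eq_empty_of_forall_notMem fun c hc => h.not_ge ?_
  obtain ⟨rfl, rfl, hpos⟩ := mem_comps.1 hc
  calc k = ∑ _t : Fin k, 1 := by simp
    _ ≤ ∑ t, ((c t).1 + (c t).2) := sum_le_sum fun t _ => hpos t
    _ = ∑ t, (c t).1 + ∑ t, (c t).2 := sum_add_distrib

theorem comps_one {p q : ℕ} (h : 1 ≤ p + q) : Comps 1 p q = {fun _ => (p, q)} := by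
  ext c
  simp only [mem_comps, mem_singleton, funext_iff, Fin.forall_fin_one, Fin.sum_univ_one,
    Prod.ext_iff]
  omega

theorem snoc_mem_comps {k p q : ℕ} {c : Fin k → ℕ × ℕ} {d : ℕ × ℕ} :
    (Fin.snoc c d : Fin (k + 1) → ℕ × ℕ) ∈ Comps (k + 1) p q ↔
      ∑ t, (c t).1 + d.1 = p ∧ ∑ t, (c t).2 + d.2 = q ∧
        (∀ t, 1 ≤ (c t).1 + (c t).2) ∧ 1 ≤ d.1 + d.2 := by
  simp only [mem_comps, Fin.sum_univ_castSucc, Fin.forall_fin_succ', Fin.snoc_castSucc,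
    Fin.snoc_last]

theorem sum_comps_succ {B : Type*} [AddCommMonoid B] (k p q : ℕ)
    (f : (Fin (k + 1) → ℕ × ℕ) → B) :
    ∑ c ∈ Comps (k + 1) p q, f c =
      ∑ a ∈ antidiagonal p ×ˢ antidiagonal q with 1 ≤ a.1.2 + a.2.2,
        ∑ c ∈ Comps k a.1.1 a.2.1, f (Fin.snoc c (a.1.2, a.2.2)) := by
  rw [sum_sigma']
  refine (sum_bij' (fun a _ => Fin.snoc a.2 (a.1.1.2, a.1.2.2))
    (fun c _ => ⟨((∑ t, (Fin.init c t).1, (c (Fin.last k)).1),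
      (∑ t, (Fin.init c t).2, (c (Fin.last k)).2)), Fin.init c⟩) ?_ ?_ ?_ ?_ ?_).symm
  · rintro ⟨⟨⟨i, i'⟩, ⟨j, j'⟩⟩, c⟩ hc
    simp only [mem_sigma, mem_filter, mem_product, HasAntidiagonal.mem_antidiagonal,
      mem_comps] at hc
    obtain ⟨⟨⟨hi, hj⟩, hd⟩, rfl, rfl, hpos⟩ := hc
    exact snoc_mem_comps.2 ⟨hi, hj, hpos, hd⟩
  · intro c hc
    rw [← Fin.snoc_init_self c, snoc_mem_comps] at hc
    obtain ⟨hi, hj, hpos, hd⟩ := hc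
    simp only [mem_sigma, mem_filter, mem_product, HasAntidiagonal.mem_antidiagonal, mem_comps]
    exact ⟨⟨⟨hi, hj⟩, hd⟩, trivial, trivial, hpos⟩
  · rintro ⟨⟨⟨i, i'⟩, ⟨j, j'⟩⟩, c⟩ hc
    simp only [mem_sigma, mem_comps] at hc
    obtain ⟨-, rfl, rfl, -⟩ := hc
    simp only [Fin.init_snoc, Fin.snoc_last]
  · exact fun c _ => Fin.snoc_init_self c
  · exact fun _ _ => rfl

variable {k : ℕ} (c : Fin k → ℕ × ℕ) (d : ℕ × ℕ)

theorem off1_snoc_castSucc (t : Fin k) :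
    off1 (Fin.snoc c d : Fin (k + 1) → ℕ × ℕ) t.castSucc = off1 c t := by
  simp [off1, sum_filter, Fin.sum_univ_castSucc, (Fin.castSucc_lt_last t).not_gt]

theorem off2_snoc_castSucc (t : Fin k) :
    off2 (Fin.snoc c d : Fin (k + 1) → ℕ × ℕ) t.castSucc = off2 c t := by
  simp [off2, sum_filter, Fin.sum_univ_castSucc, (Fin.castSucc_lt_last t).not_gt]

theorem off1_snoc_last :
    off1 (Fin.snoc c d : Fin (k + 1) → ℕ × ℕ) (Fin.last k) = ∑ t, (c t).1 := by
  simp [off1, sum_filter, Fin.sum_univ_castSucc, Fin.castSucc_lt_last]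

theorem off2_snoc_last :
    off2 (Fin.snoc c d : Fin (k + 1) → ℕ × ℕ) (Fin.last k) = ∑ t, (c t).2 := by
  simp [off2, sum_filter, Fin.sum_univ_castSucc, Fin.castSucc_lt_last]

end Compositions

section Omega

variable {A : Type*}

theorem omegaIter_congr (s : A → A → A) {x y : ℕ → A} {n : ℕ} (h : ∀ i ≤ n, x i = y i) :
    omegaIter s x n = omegaIter s y n := by
  induction n with
  | zero => exact h 0 le_rfl
  | succ n ih => rw [omegaIter, omegaIter, ih fun i hi => h i (by omega), h (n + 1) le_rfl]

/-- The sequence `(y₀ ≻ y₁), y₂, y₃, …`, in which the first two terms of `y` are merged. -/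
def mergeHead (s : A → A → A) (y : ℕ → A) (j : ℕ) : A :=
  if j = 0 then s (y 0) (y 1) else y (j + 1)

theorem omegaIter_mergeHead (s : A → A → A) (y : ℕ → A) (n : ℕ) :
    omegaIter s (mergeHead s y) n = omegaIter s y (n + 1) := by
  induction n with
  | zero => rfl
  | succ n ih => rw [omegaIter, ih]; rfl

/-- `M_{pq}(x; y)` evaluated at the initial segments of lengths `p` and `q` of two sequences. -/
def applySeq (M : ∀ p q : ℕ, (Fin p → A) → (Fin q → A) → A) (p q : ℕ) (x y : ℕ → A) : A :=
  M p q (fun i => x i) (fun j => y j)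

/-- `ω^≻(M_{i₁j₁}(x¹; y¹), …, M_{i_kj_k}(x^k; y^k))` for the composition `c`. The value is junk for
`k = 0`. -/
def omegaBlocks [Zero A] (s : A → A → A) (M : ∀ p q : ℕ, (Fin p → A) → (Fin q → A) → A)
    {k : ℕ} (c : Fin k → ℕ × ℕ) (x y : ℕ → A) : A :=
  omegaIter s (fun t => if h : t < k then blockVal M c x y ⟨t, h⟩ else 0) (k - 1)

variable [Zero A] (s : A → A → A) (M : ∀ p q : ℕ, (Fin p → A) → (Fin q → A) → A)

theorem omegaBlocks_one (p q : ℕ) (x y : ℕ → A) :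
    omegaBlocks s M (fun _ : Fin 1 => (p, q)) x y = applySeq M p q x y := by
  simp [omegaBlocks, omegaIter, blockVal, applySeq, off1, off2]

theorem omegaBlocks_snoc {k : ℕ} (c : Fin (k + 1) → ℕ × ℕ) (d : ℕ × ℕ) (x y : ℕ → A) :
    omegaBlocks s M (Fin.snoc c d : Fin (k + 2) → ℕ × ℕ) x y =
      s (omegaBlocks s M c x y)
        (applySeq M d.1 d.2 (fun i => x (i + ∑ t, (c t).1)) (fun j => y (j + ∑ t, (c t).2))) := by
  have hlast : blockVal M (Fin.snoc c d : Fin (k + 2) → ℕ × ℕ) x y (Fin.last (k + 1)) =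
      applySeq M d.1 d.2 (fun i => x (i + ∑ t, (c t).1)) (fun j => y (j + ∑ t, (c t).2)) := by
    rw [blockVal, off1_snoc_last, off2_snoc_last, Fin.snoc_last]
    simp only [applySeq, add_comm]
  have hinit (t : Fin (k + 1)) :
      blockVal M (Fin.snoc c d : Fin (k + 2) → ℕ × ℕ) x y t.castSucc = blockVal M c x y t := by
    rw [blockVal, off1_snoc_castSucc, off2_snoc_castSucc, Fin.snoc_castSucc, blockVal]
  rw [← hlast]
  refine congrArg₂ s (omegaIter_congr s fun t ht => ?_) (dif_pos (Nat.lt_succ_self (k + 1)))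
  rw [dif_pos (by omega), dif_pos (by omega)]
  exact hinit ⟨t, by omega⟩

end Omega

section BlockSum

variable {A : Type*} [AddCommMonoid A]

/-- The sum `T_{pq}(x; y)` of `ω^≻(M_{i₁j₁}, …, M_{i_kj_k})` over all compositions of `(p, q)` into
`k ≥ 1` blocks; the summation index is `k - 1`. -/
def blockSum (s : A → A → A) (M : ∀ p q : ℕ, (Fin p → A) → (Fin q → A) → A)
    (p q : ℕ) (x y : ℕ → A) : A :=
  ∑ k ∈ range (p + q), ∑ c ∈ Comps (k + 1) p q, omegaBlocks s M c x y

theorem blockSum_zero_zero (s : A → A → A) (M : ∀ p q : ℕ, (Fin p → A) → (Fin q → A) → A)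
    (x y : ℕ → A) : blockSum s M 0 0 x y = 0 :=
  sum_range_zero _

theorem sum_range_omegaBlocks (s : A → A → A) (M : ∀ p q : ℕ, (Fin p → A) → (Fin q → A) → A)
    {p q N : ℕ} (h : p + q ≤ N) (x y : ℕ → A) :
    ∑ k ∈ range N, ∑ c ∈ Comps (k + 1) p q, omegaBlocks s M c x y = blockSum s M p q x y := by
  refine (sum_subset (range_subset_range.2 h) fun k _ hk => ?_).symm
  rw [comps_eq_empty_of_lt (by rw [mem_range] at hk; omega), sum_empty]

theorem blockSum_eq_applySeq_add (s : A → A → A)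
    (M : ∀ p q : ℕ, (Fin p → A) → (Fin q → A) → A) {p q : ℕ} (h : 1 ≤ p + q) (x y : ℕ → A) :
    blockSum s M p q x y = applySeq M p q x y +
      ∑ k ∈ Icc 2 (p + q), ∑ c ∈ Comps k p q, omegaBlocks s M c x y := by
  have hIcc : blockSum s M p q x y =
      ∑ k ∈ Icc 1 (p + q), ∑ c ∈ Comps k p q, omegaBlocks s M c x y := by
    rw [blockSum, range_eq_Ico, ← Ico_add_one_right_eq_Icc]
    exact sum_Ico_add' (fun k => ∑ c ∈ Comps k p q, omegaBlocks s M c x y) 0 (p + q) 1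
  rw [hIcc, ← add_sum_Ioc_eq_sum_Icc h, comps_one h, sum_singleton, omegaBlocks_one]
  rfl

variable (succ : A →+ A →+ A) (M : ∀ p q : ℕ, (Fin p → A) → (Fin q → A) → A)

/-- The sum over `j + j' = q` of `T_{ij}(x; y) ≻ M_{i'j'}(x'; y')`, where `x'` and `y'` are `x` and
`y` without their first `i` and `j` terms: the part of the recursion for `T_{i+i',q}` whose last
block takes `i'` of the `x`'s. -/
def rowSum (i i' q : ℕ) (x y : ℕ → A) : A :=
  ∑ b ∈ antidiagonal q, succ (blockSum (succ · ·) M i b.1 x y)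
    (applySeq M i' b.2 (fun t => x (t + i)) (fun t => y (t + b.1)))

theorem sum_range_omegaBlocks_add_two (p q : ℕ) (x y : ℕ → A) :
    ∑ k ∈ range (p + q), ∑ c ∈ Comps (k + 2) p q, omegaBlocks (succ · ·) M c x y =
      ∑ a ∈ antidiagonal p ×ˢ antidiagonal q with 1 ≤ a.1.2 + a.2.2,
        succ (blockSum (succ · ·) M a.1.1 a.2.1 x y)
          (applySeq M a.1.2 a.2.2 (fun t => x (t + a.1.1)) (fun t => y (t + a.2.1))) := by
  simp only [sum_comps_succ (_ + 1)]
  rw [sum_comm]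
  refine sum_congr rfl fun a ha => ?_
  simp only [mem_filter, mem_product, HasAntidiagonal.mem_antidiagonal] at ha
  rw [← sum_range_omegaBlocks (succ · ·) M (N := p + q) (by omega)]
  simp only [map_sum, AddMonoidHom.finsetSum_apply]
  refine sum_congr rfl fun k _ => sum_congr rfl fun c hc => ?_
  obtain ⟨hi, hj, -⟩ := mem_comps.1 hc
  rw [omegaBlocks_snoc, hi, hj]

variable {M}

theorem blockSum_eq_applySeq_add_sum_rowSum (hM00 : ∀ x y, M 0 0 x y = 0) (p q : ℕ)
    (x y : ℕ → A) :
    blockSum (succ · ·) M p q x y =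
      applySeq M p q x y + ∑ a ∈ antidiagonal p, rowSum succ M a.1 a.2 q x y := by
  have hone : ∑ c ∈ Comps 1 p q, omegaBlocks (succ · ·) M c x y = applySeq M p q x y := by
    rcases Nat.eq_zero_or_pos (p + q) with h | h
    · obtain ⟨rfl, rfl⟩ := Nat.add_eq_zero_iff.1 h
      rw [comps_eq_empty_of_lt Nat.zero_lt_one, sum_empty, applySeq, hM00]
    · rw [comps_one h, sum_singleton, omegaBlocks_one]
  rw [← sum_range_omegaBlocks (succ · ·) M (Nat.le_succ (p + q)), sum_range_succ', zero_add, hone,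
    add_comm, sum_range_omegaBlocks_add_two]
  simp only [rowSum]
  rw [← sum_product', sum_filter_of_ne]
  rintro ⟨⟨i, i'⟩, ⟨j, j'⟩⟩ - hne
  contrapose! hne
  obtain ⟨rfl, rfl⟩ : i' = 0 ∧ j' = 0 := by simpa using hne
  rw [applySeq, hM00, map_zero]

end BlockSum

section Normalized

variable {A : Type*} [Zero A]

/-- The normalization `M_{00} = 0`, `M_{10} = M_{01} = id`, `M_{p0} = 0 = M_{0q}` for `p, q ≥ 2` of
a family of multibrace operations. -/
structure IsNormalizedMultibrace (M : ∀ p q : ℕ, (Fin p → A) → (Fin q → A) → A) : Prop where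
  zero_zero : ∀ x y, M 0 0 x y = 0
  one_zero : ∀ x y, M 1 0 x y = x 0
  zero_one : ∀ x y, M 0 1 x y = y 0
  right_zero : ∀ p, 2 ≤ p → ∀ x y, M p 0 x y = 0
  left_zero : ∀ q, 2 ≤ q → ∀ x y, M 0 q x y = 0

variable {M : ∀ p q : ℕ, (Fin p → A) → (Fin q → A) → A}

namespace IsNormalizedMultibrace

theorem applySeq_right_zero (hM : IsNormalizedMultibrace M) (p : ℕ) (x y : ℕ → A) :
    applySeq M p 0 x y = if p = 1 then x 0 else 0 := by
  match p with
  | 0 => exact hM.zero_zero _ _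
  | 1 => exact hM.one_zero _ _
  | p + 2 => exact hM.right_zero _ (by omega) _ _

theorem applySeq_left_zero (hM : IsNormalizedMultibrace M) (q : ℕ) (x y : ℕ → A) :
    applySeq M 0 q x y = if q = 1 then y 0 else 0 := by
  match q with
  | 0 => exact hM.zero_zero _ _
  | 1 => exact hM.zero_one _ _
  | q + 2 => exact hM.left_zero _ (by omega) _ _

end IsNormalizedMultibrace

end Normalized

section Boundary

variable {A : Type*} [AddCommMonoid A] {M : ∀ p q : ℕ, (Fin p → A) → (Fin q → A) → A}
  (succ : A →+ A →+ A)

namespace IsNormalizedMultibrace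

theorem blockSum_succ_zero (hM : IsNormalizedMultibrace M) (p : ℕ) (x y : ℕ → A) :
    blockSum (succ · ·) M (p + 1) 0 x y = omegaIter (succ · ·) x p := by
  induction p with
  | zero =>
    rw [blockSum_eq_applySeq_add_sum_rowSum succ hM.zero_zero]
    simp [rowSum, Nat.antidiagonal_succ, hM.applySeq_right_zero, blockSum_zero_zero, omegaIter]
  | succ p ih =>
    rw [blockSum_eq_applySeq_add_sum_rowSum succ hM.zero_zero,
      sum_eq_single_of_mem (p + 1, 1) (by simp)]
    · simp [rowSum, hM.applySeq_right_zero, ih, omegaIter]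
    · rintro ⟨i, i'⟩ hmem hne
      have hi' : i' ≠ 1 := by rintro rfl; simp_all
      simp [rowSum, hM.applySeq_right_zero, hi']

theorem blockSum_zero_succ (hM : IsNormalizedMultibrace M) (q : ℕ) (x y : ℕ → A) :
    blockSum (succ · ·) M 0 (q + 1) x y = omegaIter (succ · ·) y q := by
  induction q with
  | zero =>
    rw [blockSum_eq_applySeq_add_sum_rowSum succ hM.zero_zero]
    simp [rowSum, Nat.antidiagonal_succ, hM.applySeq_left_zero, blockSum_zero_zero, omegaIter]
  | succ q ih =>
    rw [blockSum_eq_applySeq_add_sum_rowSum succ hM.zero_zero, Nat.antidiagonal_zero,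
      sum_singleton, rowSum, sum_eq_single_of_mem (q + 1, 1) (by simp)]
    · simp [hM.applySeq_left_zero, ih, omegaIter]
    · rintro ⟨j, j'⟩ hmem hne
      have hj' : j' ≠ 1 := by rintro rfl; simp_all
      simp [hM.applySeq_left_zero, hj']

end IsNormalizedMultibrace

end Boundary

section Dipterous

variable {A : Type*} [AddCommGroup A] {star : A → A → A} {succ : A →+ A →+ A}
  {M : ∀ p q : ℕ, (Fin p → A) → (Fin q → A) → A}

/-- `M` is the family of multibrace operations defined recursively from the two products `*` and
`≻` of a dipterous algebra. -/
structure IsDipterousMultibrace (star : A → A → A) (succ : A →+ A →+ A)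
    (M : ∀ p q : ℕ, (Fin p → A) → (Fin q → A) → A) : Prop extends IsNormalizedMultibrace M where
  recursion : ∀ p q : ℕ, 1 ≤ p → 1 ≤ q → ∀ x y : ℕ → A,
    applySeq M p q x y =
      star (omegaIter (succ · ·) x (p - 1)) (omegaIter (succ · ·) y (q - 1)) -
        ∑ k ∈ Icc 2 (p + q), ∑ c ∈ Comps k p q, omegaBlocks (succ · ·) M c x y

namespace IsDipterousMultibrace

theorem blockSum_succ_succ (hM : IsDipterousMultibrace star succ M) (p q : ℕ) (x y : ℕ → A) :
    blockSum (succ · ·) M (p + 1) (q + 1) x y =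
      star (omegaIter (succ · ·) x p) (omegaIter (succ · ·) y q) := by
  rw [blockSum_eq_applySeq_add _ _ (by omega), hM.recursion _ _ (by omega) (by omega),
    sub_add_cancel, Nat.add_sub_cancel, Nat.add_sub_cancel]

theorem blockSum_mergeHead (hM : IsDipterousMultibrace star succ M) (p q : ℕ) (x y : ℕ → A) :
    blockSum (succ · ·) M p (q + 1) x (mergeHead (succ · ·) y) =
      blockSum (succ · ·) M p (q + 2) x y := by
  cases p with
  | zero => rw [hM.blockSum_zero_succ, hM.blockSum_zero_succ, omegaIter_mergeHead]
  | succ p => rw [hM.blockSum_succ_succ, hM.blockSum_succ_succ, omegaIter_mergeHead]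

theorem rowSum_add_two (hM : IsDipterousMultibrace star succ M) (i p q : ℕ) (x y : ℕ → A) :
    rowSum succ M i p (q + 2) x y =
      succ (blockSum (succ · ·) M i 0 x y) (applySeq M p (q + 2) (fun t => x (t + i)) y) +
        (succ (blockSum (succ · ·) M i 1 x y)
            (applySeq M p (q + 1) (fun t => x (t + i)) fun t => y (t + 1)) +
          (rowSum succ M i p (q + 1) x (mergeHead (succ · ·) y) -
            succ (blockSum (succ · ·) M i 0 x (mergeHead (succ · ·) y))
              (applySeq M p (q + 1) (fun t => x (t + i)) (mergeHead (succ · ·) y)))) := by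
  have hshift (j : ℕ) : (fun t => mergeHead (succ · ·) y (t + (j + 1))) =
      fun t => y (t + (j + 1 + 1)) := rfl
  simp only [rowSum, Nat.sum_antidiagonal_succ, hM.blockSum_mergeHead, hshift, zero_add, add_zero,
    add_sub_cancel_left]

theorem rowSum_zero_mergeHead (hM : IsDipterousMultibrace star succ M) (p q : ℕ) (x y : ℕ → A) :
    rowSum succ M 0 p (q + 2) x y =
      rowSum succ M 0 p (q + 1) x (mergeHead (succ · ·) y) +
        succ (y 0) (applySeq M p (q + 1) x fun t => y (t + 1)) := by
  simp only [hM.rowSum_add_two, blockSum_zero_zero, hM.blockSum_zero_succ succ 0, omegaIter,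
    map_zero, AddMonoidHom.zero_apply, zero_add, sub_zero, add_zero]
  exact add_comm _ _

theorem rowSum_succ_mergeHead (hM : IsDipterousMultibrace star succ M)
    (hdipt : ∀ a b c, succ (star a b) c = succ a (succ b c)) {i p q : ℕ} {x y : ℕ → A}
    (h : applySeq M p (q + 2) (fun t => x (t + (i + 1))) y =
      applySeq M p (q + 1) (fun t => x (t + (i + 1))) (mergeHead (succ · ·) y) -
        succ (y 0) (applySeq M p (q + 1) (fun t => x (t + (i + 1))) fun t => y (t + 1))) :
    rowSum succ M (i + 1) p (q + 2) x y =
      rowSum succ M (i + 1) p (q + 1) x (mergeHead (succ · ·) y) := by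
  rw [hM.rowSum_add_two, h, hM.blockSum_succ_zero, hM.blockSum_succ_zero,
    hM.blockSum_succ_succ i 0, omegaIter, hdipt, map_sub]
  abel

end IsDipterousMultibrace

end Dipterous

theorem dipterous_Mnm_identity_general {A : Type*} [AddCommGroup A] {star : A → A → A}
    {succ : A →+ A →+ A} {M : ∀ p q : ℕ, (Fin p → A) → (Fin q → A) → A}
    (hM : IsDipterousMultibrace star succ M)
    (hdipt : ∀ a b c, succ (star a b) c = succ a (succ b c)) (n m : ℕ) (x y : ℕ → A) :
    applySeq M n (m + 2) x y =
      applySeq M n (m + 1) x (mergeHead (succ · ·) y) -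
        succ (y 0) (applySeq M n (m + 1) x fun t => y (t + 1)) := by
  induction n using Nat.strong_induction_on generalizing x with
  | _ n ih =>
    cases n with
    | zero => cases m <;> simp [hM.applySeq_left_zero, mergeHead]
    | succ n =>
      have hrow : ∀ a ∈ antidiagonal n, rowSum succ M (a.1 + 1) a.2 (m + 2) x y =
          rowSum succ M (a.1 + 1) a.2 (m + 1) x (mergeHead (succ · ·) y) := fun a ha =>
        hM.rowSum_succ_mergeHead hdipt
          (ih a.2 (Nat.lt_succ_of_le (HasAntidiagonal.antidiagonal.snd_le ha)) _)
      have hT := hM.blockSum_mergeHead (n + 1) m x y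
      rw [blockSum_eq_applySeq_add_sum_rowSum succ hM.zero_zero,
        blockSum_eq_applySeq_add_sum_rowSum succ hM.zero_zero, Nat.sum_antidiagonal_succ,
        Nat.sum_antidiagonal_succ, sum_congr rfl hrow, hM.rowSum_zero_mergeHead] at hT
      grind only

/-- For the multibrace operations `M_{pq}` induced on a dipterous algebra,
`M_{nm}(x₁,…,x_n; y₁,…,y_m)
  = M_{n(m-1)}(x₁,…,x_n; (y₁≻y₂), y₃,…,y_m) − y₁ ≻ M_{n(m-1)}(x₁,…,x_n; y₂,…,y_m)`
for all `n ≥ 1` and `m ≥ 2`. -/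
theorem dipterous_Mnm_identity (K A : Type*) [Field K] [AddCommGroup A] [Module K A]
    (star succ : A →ₗ[K] A →ₗ[K] A)
    (hstar : ∀ x y z : A, star (star x y) z = star x (star y z))
    (hdipt : ∀ x y z : A, succ (star x y) z = succ x (succ y z))
    (M : ∀ p q : ℕ, (Fin p → A) → (Fin q → A) → A)
    (hM00 : ∀ x y, M 0 0 x y = 0)
    (hM10 : ∀ x y, M 1 0 x y = x 0)
    (hM01 : ∀ x y, M 0 1 x y = y 0)
    (hMp0 : ∀ p, 2 ≤ p → ∀ x y, M p 0 x y = 0)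
    (hM0q : ∀ q, 2 ≤ q → ∀ x y, M 0 q x y = 0)
    (hMrec : ∀ p q : ℕ, 1 ≤ p → 1 ≤ q → ∀ x y : ℕ → A,
      M p q (fun i : Fin p => x i.1) (fun i : Fin q => y i.1)
        = star (omegaIter (fun a b => succ a b) x (p - 1))
            (omegaIter (fun a b => succ a b) y (q - 1))
          - ∑ k ∈ Finset.Icc 2 (p + q), ∑ c ∈ Comps k p q,
              omegaIter (fun a b => succ a b)
                (fun t => if h : t < k then blockVal M c x y ⟨t, h⟩ else 0) (k - 1)) :
    ∀ n m : ℕ, 1 ≤ n → 2 ≤ m → ∀ x y : ℕ → A,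
      M n m (fun i : Fin n => x i.1) (fun j : Fin m => y j.1)
        = M n (m - 1) (fun i : Fin n => x i.1)
            (fun j : Fin (m - 1) => if j.1 = 0 then succ (y 0) (y 1) else y (j.1 + 1))
          - succ (y 0)
              (M n (m - 1) (fun i : Fin n => x i.1)
                (fun j : Fin (m - 1) => y (j.1 + 1))) := by
  rintro n m - hm x y
  obtain ⟨r, rfl⟩ := Nat.exists_eq_add_of_le' hm
  exact dipterous_Mnm_identity_general (star := (star · ·))
    (succ := LinearMap.toAddMonoidHom'.comp succ.toAddMonoidHom)
    ⟨⟨hM00, hM10, hM01, hMp0, hM0q⟩, hMrec⟩ hdipt n r x y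
end

section
/- Let K be a commutative ring and A a K-module equipped with two K-bilinear operations ≺ and ≻; set x*y := x≺y + x≻y. Then the following are equivalent: (i) (A, *, ≻) is a dipterous algebra satisfying the additional relation (x≻y)≺z = x≻(y≺z), i.e., (x*y)*z = x*(y*z), (x*y)≻z = x≻(y≻z) and (x≻y)≺z = x≻(y≺z) hold for all x,y,z; (ii) (A, ≺, ≻) is a dendriform algebra, i.e., (x≺y)≺z = x≺(y*z), (x≻y)≺z = x≻(y≺z) and (x*y)≻z = x≻(y≻z) hold for all x,y,z. -/
section

variable {A : Type*} {prec succ : A → A → A}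

local infixl:70 " ≺ " => prec
local infixl:70 " ≻ " => succ
local notation:70 x:71 " ⋆ " y:71 => prec x y + succ x y

theorem mul_mul_eq_prec_prec_add_succ_mul [AddSemigroup A]
    (add_prec : ∀ x y z : A, (x + y) ≺ z = x ≺ z + y ≺ z)
    (succ_add : ∀ x y z : A, x ≻ (y + z) = x ≻ y + x ≻ z) {x y z : A}
    (mul_succ : (x ⋆ y) ≻ z = x ≻ (y ≻ z)) (succ_prec : (x ≻ y) ≺ z = x ≻ (y ≺ z)) :
    (x ⋆ y) ⋆ z = (x ≺ y) ≺ z + x ≻ (y ⋆ z) :=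
  calc (x ⋆ y) ⋆ z
    _ = (x ≺ y) ≺ z + (x ≻ y) ≺ z + (x ⋆ y) ≻ z := by rw [add_prec]
    _ = (x ≺ y) ≺ z + x ≻ (y ≺ z) + x ≻ (y ≻ z) := by rw [succ_prec, mul_succ]
    _ = (x ≺ y) ≺ z + x ≻ (y ⋆ z) := by rw [succ_add, add_assoc]

theorem mul_assoc_iff_prec_prec_eq_prec_mul [AddSemigroup A] [IsRightCancelAdd A]
    (add_prec : ∀ x y z : A, (x + y) ≺ z = x ≺ z + y ≺ z)
    (succ_add : ∀ x y z : A, x ≻ (y + z) = x ≻ y + x ≻ z) {x y z : A}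
    (mul_succ : (x ⋆ y) ≻ z = x ≻ (y ≻ z)) (succ_prec : (x ≻ y) ≺ z = x ≻ (y ≺ z)) :
    (x ⋆ y) ⋆ z = x ⋆ (y ⋆ z) ↔ (x ≺ y) ≺ z = x ≺ (y ⋆ z) := by
  rw [mul_mul_eq_prec_prec_add_succ_mul add_prec succ_add mul_succ succ_prec, add_left_inj]

theorem dipterous_with_middle_iff_dendriform_general [AddSemigroup A] [IsRightCancelAdd A]
    (add_prec : ∀ x y z : A, (x + y) ≺ z = x ≺ z + y ≺ z)
    (succ_add : ∀ x y z : A, x ≻ (y + z) = x ≻ y + x ≻ z) :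
    ((∀ x y z : A, (x ⋆ y) ⋆ z = x ⋆ (y ⋆ z)) ∧
     (∀ x y z : A, (x ⋆ y) ≻ z = x ≻ (y ≻ z)) ∧
     (∀ x y z : A, (x ≻ y) ≺ z = x ≻ (y ≺ z)))
    ↔
    ((∀ x y z : A, (x ≺ y) ≺ z = x ≺ (y ⋆ z)) ∧
     (∀ x y z : A, (x ≻ y) ≺ z = x ≻ (y ≺ z)) ∧
     (∀ x y z : A, (x ⋆ y) ≻ z = x ≻ (y ≻ z))) := by
  have assoc_iff {x y z : A} := mul_assoc_iff_prec_prec_eq_prec_mul add_prec succ_add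
    (x := x) (y := y) (z := z)
  constructor
  · rintro ⟨mul_assoc, mul_succ, succ_prec⟩
    exact ⟨fun x y z ↦ (assoc_iff (mul_succ x y z) (succ_prec x y z)).mp (mul_assoc x y z),
      succ_prec, mul_succ⟩
  · rintro ⟨prec_prec, succ_prec, mul_succ⟩
    exact ⟨fun x y z ↦ (assoc_iff (mul_succ x y z) (succ_prec x y z)).mpr (prec_prec x y z),
      mul_succ, succ_prec⟩

end

/-- For a module with two bilinear operations `≺`, `≻` and
`x * y := x ≺ y + x ≻ y`, being a dipterous algebra satisfying the extra relation
`(x≻y)≺z = x≻(y≺z)` is equivalent to being a dendriform algebra. -/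
theorem dipterous_with_middle_iff_dendriform (K A : Type*) [CommRing K]
    [AddCommGroup A] [Module K A]
    (prec succ : A →ₗ[K] A →ₗ[K] A) :
    ((∀ x y z : A,
        (prec (prec x y + succ x y) z + succ (prec x y + succ x y) z)
          = prec x (prec y z + succ y z) + succ x (prec y z + succ y z)) ∧
     (∀ x y z : A, succ (prec x y + succ x y) z = succ x (succ y z)) ∧
     (∀ x y z : A, prec (succ x y) z = succ x (prec y z)))
    ↔
    ((∀ x y z : A, prec (prec x y) z = prec x (prec y z + succ y z)) ∧
     (∀ x y z : A, prec (succ x y) z = succ x (prec y z)) ∧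
     (∀ x y z : A, succ (prec x y + succ x y) z = succ x (succ y z))) :=
  dipterous_with_middle_iff_dendriform_general (prec := (prec · ·)) (succ := (succ · ·))
    (LinearMap.map_add₂ prec) (fun x ↦ map_add (succ x))
end
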